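/- arXiv:2501.00690 — 2 statements merged into one kernel-verified Lean document; each statement's English description precedes it below -/
import Mathlib

section
/- Let R > 1/4, ε ∈ (0,1/2), and let ν, κ ∈ (0,1) satisfy max(ν,κ)/min(ν,κ) ≤ 4√R − 1 − ε; set μ := min(ν,κ)·(1 − 1/(4√R) − (1/(4√R))·max(ν,κ)/min(ν,κ)). Then there exist positive constants c₁, c₂, C depending only on R and ε (independent of ν, κ, k, η) such that the following holds. For all k ≠ 0 and η ∈ ℝ, set p(t) := k² + (η − kt)², λ := μ^{1/3}·|k|^{2/3} if |k| ≥ μ and λ := k²/ν if |k| < μ, and α := 1 if |k| < μ and α := μ^{2/3}·|k|^{−2/3} if |k| ≥ μ. If Ω, Θ : [0,∞) → ℂ are differentiable and satisfy Ω′(t) = −ν·p(t)·Ω(t) − R·i·k·Θ(t) and Θ′(t) = −κ·p(t)·Θ(t) − (i·k/p(t))·Ω(t), then for all t ≥ 0: p(t)^{−1/2}·|(1 + c₂·α·i·(η − kt))·Ω(t)|² + p(t)^{1/2}·|(1 + c₂·α·i·(η − kt))·Θ(t)|² ≤ C·e^{−c₁·λ·t}·[ (k² + η²)^{−1/2}·|(1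 + c₂·α·i·η)·Ω(0)|² + (k² + η²)^{1/2}·|(1 + c₂·α·i·η)·Θ(0)|² ]. -/
open Real MeasureTheory

noncomputable section

/-- The moving-frame Laplacian symbol `p(t) = k² + (η − kt)²`. -/
def pfun (k η t : ℝ) : ℝ := k ^ 2 + (η - k * t) ^ 2

/-- Its time derivative `p′(t) = −2k(η − kt)`. -/
def pder (k η t : ℝ) : ℝ := -(2 * k * (η - k * t))

/-- The symmetrizing weight `G(t) = p′(t)/(|k|·p(t)^{1/2})`. -/
def Gfun (k η t : ℝ) : ℝ := pder k η t / (|k| * Real.sqrt (pfun k η t))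

/-- The exponential weight `N(t) = exp(−G(t)/(2√R − 1))`. -/
def Nfun (R k η t : ℝ) : ℝ := Real.exp (-(1 / (2 * Real.sqrt R - 1)) * Gfun k η t)

/-- The inviscid damping multiplier `𝔍(t) = (1/2)·arctan(η/k − t)`. -/
def Jfun (k η t : ℝ) : ℝ := (1 / 2) * Real.arctan (η / k - t)

/-- The effective diffusivity `μ`. -/
def muDef (R ν κ : ℝ) : ℝ :=
  min ν κ * (1 - 1 / (4 * Real.sqrt R) - 1 / (4 * Real.sqrt R) * (max ν κ / min ν κ))

/-- The decay rate `λ`. -/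
def lamDef (ν μ k : ℝ) : ℝ :=
  if μ ≤ |k| then μ ^ ((1 : ℝ) / 3) * |k| ^ ((2 : ℝ) / 3) else k ^ 2 / ν

/-- The weight `α`. -/
def alphaDef (μ k : ℝ) : ℝ :=
  if |k| < μ then 1 else μ ^ ((2 : ℝ) / 3) * |k| ^ (-(2 : ℝ) / 3)

/-- The weight `β`. -/
def betaDef (μ k : ℝ) : ℝ :=
  if |k| < μ then μ⁻¹ else μ ^ ((1 : ℝ) / 3) * |k| ^ (-(4 : ℝ) / 3)

/-- `(Z, Q)` is a solution of the linearized symmetrized Boussinesq–Couette system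
at frequency `(k, η)`. -/
def IsSol (R ν κ k η : ℝ) (Z Q : ℝ → ℂ) : Prop :=
  ∀ t : ℝ, 0 ≤ t →
    HasDerivAt Z ((((1 / 4) * (pder k η t / pfun k η t) : ℝ) : ℂ) * Z t
        - ((Real.sqrt R * (|k| / Real.sqrt (pfun k η t)) : ℝ) : ℂ) * Q t
        - ((ν * pfun k η t : ℝ) : ℂ) * Z t) t ∧
    HasDerivAt Q (-(((1 / 4) * (pder k η t / pfun k η t) : ℝ) : ℂ) * Q t
        + ((Real.sqrt R * (|k| / Real.sqrt (pfun k η t)) : ℝ) : ℂ) * Z t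
        - ((κ * pfun k η t : ℝ) : ℂ) * Q t) t

/-- The hypocoercive pointwise energy functional `E_k`. -/
def energy (R cτ cα cβ μ k η : ℝ) (Z Q : ℝ → ℂ) (t : ℝ) : ℝ :=
  (Nfun R k η t + cτ * Jfun k η t) * (‖Z t‖ ^ 2 + ‖Q t‖ ^ 2)
    + 1 / (2 * Real.sqrt R) * Gfun k η t * (Nfun R k η t + cτ * Jfun k η t)
        * (Z t * (starRingEnd ℂ) (Q t)).re
    + cα * alphaDef μ k *
        ((Nfun R k η t + cτ * Jfun k η t) * (η - k * t) ^ 2 * (‖Z t‖ ^ 2 + ‖Q t‖ ^ 2)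
          + 1 / (2 * Real.sqrt R) * Gfun k η t * (Nfun R k η t + cτ * Jfun k η t)
              * (η - k * t) ^ 2 * (Z t * (starRingEnd ℂ) (Q t)).re)
    + cβ * betaDef μ k *
        (k * (η - k * t) * (‖Z t‖ ^ 2 + ‖Q t‖ ^ 2)
          - 1 / (2 * Real.sqrt R) * Gfun k η t * (k * (η - k * t))
              * (Z t * (starRingEnd ℂ) (Q t)).re)

/-- The pointwise dissipation functional `D_k`. -/
def dissip (R cτ cα cβ μ k η : ℝ) (Z Q : ℝ → ℂ) (t : ℝ) : ℝ :=
  μ * pfun k η t * (‖Z t‖ ^ 2 + ‖Q t‖ ^ 2)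
    + cτ * (k ^ 2 / pfun k η t) * (‖Z t‖ ^ 2 + ‖Q t‖ ^ 2)
    + cα * alphaDef μ k * μ * pfun k η t * (η - k * t) ^ 2 * (‖Z t‖ ^ 2 + ‖Q t‖ ^ 2)
    + cτ * cα * alphaDef μ k * (k ^ 2 * (η - k * t) ^ 2 / pfun k η t)
        * (‖Z t‖ ^ 2 + ‖Q t‖ ^ 2)
    + 1 / Real.sqrt R * (|k| ^ 3 / (pfun k η t * Real.sqrt (pfun k η t)))
        * (‖Z t‖ ^ 2 + ‖Q t‖ ^ 2)
    + cα / Real.sqrt R * alphaDef μ k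
        * (|k| ^ 3 * (η - k * t) ^ 2 / (pfun k η t * Real.sqrt (pfun k η t)))
        * (‖Z t‖ ^ 2 + ‖Q t‖ ^ 2)
    + cβ * betaDef μ k * k ^ 2 * (‖Z t‖ ^ 2 + ‖Q t‖ ^ 2)

lemma aux_pos (k η t : ℝ) (hk : k ≠ 0) : 0 < pfun k η t := by
  unfold pfun; positivity

lemma aux_xi (k η t : ℝ) : HasDerivAt (fun s : ℝ => η - k * s) (-k) t := by
  simpa using ((hasDerivAt_id t).const_mul k).const_sub η

lemma aux_q (k η t : ℝ) (hk : k ≠ 0) :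
    HasDerivAt (fun s => Real.sqrt (pfun k η s))
      (-(k * (η - k * t)) / Real.sqrt (pfun k η t)) t := by
  have hp : HasDerivAt (fun s => pfun k η s) (2 * (η - k * t) * (-k)) t := by
    unfold pfun
    simpa using ((aux_xi k η t).pow 2).const_add (k ^ 2)
  have := hp.sqrt (aux_pos k η t hk).ne'
  convert this using 1
  have : Real.sqrt (pfun k η t) ≠ 0 := (Real.sqrt_pos.2 (aux_pos k η t hk)).ne'
  field_simp

/-- The symmetrized energy. -/
def auxE (R k η : ℝ) (u v a b : ℝ → ℝ) (t : ℝ) : ℝ :=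
  (u t ^ 2 + v t ^ 2) / Real.sqrt (pfun k η t)
    + R * Real.sqrt (pfun k η t) * (a t ^ 2 + b t ^ 2)
    - (η - k * t) / Real.sqrt (pfun k η t) * (a t * v t - b t * u t)

lemma auxE_deriv (R ν κ k η t : ℝ) (hk : k ≠ 0) (u v a b : ℝ → ℝ)
    (hu : HasDerivAt u (-(ν * pfun k η t) * u t + R * k * b t) t)
    (hv : HasDerivAt v (-(ν * pfun k η t) * v t - R * k * a t) t)
    (ha : HasDerivAt a (-(κ * pfun k η t) * a t + k / pfun k η t * v t) t)
    (hb : HasDerivAt b (-(κ * pfun k η t) * b t - k / pfun k η t * u t) t) :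
    HasDerivAt (auxE R k η u v a b)
      (-2 * ν * pfun k η t * ((u t ^ 2 + v t ^ 2) / Real.sqrt (pfun k η t))
        - 2 * κ * pfun k η t * (R * Real.sqrt (pfun k η t) * (a t ^ 2 + b t ^ 2))
        + ((ν + κ) * pfun k η t * ((η - k * t) / Real.sqrt (pfun k η t))
          + k ^ 3 / Real.sqrt (pfun k η t) ^ 3) * (a t * v t - b t * u t)) t := by
  have hq := aux_q k η t hk
  have hq0 : Real.sqrt (pfun k η t) ≠ 0 := (Real.sqrt_pos.2 (aux_pos k η t hk)).ne'
  have hpq : pfun k η t = Real.sqrt (pfun k η t) ^ 2 :=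
    (Real.sq_sqrt (aux_pos k η t hk).le).symm
  have hk2 : k ^ 2 = Real.sqrt (pfun k η t) ^ 2 - (η - k * t) ^ 2 := by
    rw [← hpq]; unfold pfun; ring
  have h := (((((hu.pow 2).add (hv.pow 2)).div hq hq0).add
    ((hq.const_mul R).mul ((ha.pow 2).add (hb.pow 2)))).sub
    (((aux_xi k η t).div hq hq0).mul ((ha.mul hv).sub (hb.mul hu))))
  refine HasDerivAt.congr_deriv (f := auxE R k η u v a b) h ?_
  have hk3 : k ^ 3 = k * (Real.sqrt (pfun k η t) ^ 2 - (η - k * t) ^ 2) := by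
    rw [← hk2]; ring
  rw [hk3]
  simp only [Pi.add_apply, Pi.pow_apply, Pi.mul_apply, Pi.sub_apply, Pi.div_apply]
  generalize Real.sqrt (pfun k η t) = q at *
  rw [hpq]
  generalize η - k * t = x at *
  clear h
  field_simp
  ring

lemma aux_w (k η t : ℝ) (hk : k ≠ 0) :
    HasDerivAt (fun s => (η - k * s) / Real.sqrt (pfun k η s))
      (-(k ^ 3 / Real.sqrt (pfun k η t) ^ 3)) t := by
  have hq := aux_q k η t hk
  have hq0 : Real.sqrt (pfun k η t) ≠ 0 := (Real.sqrt_pos.2 (aux_pos k η t hk)).ne'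
  have hpq : pfun k η t = Real.sqrt (pfun k η t) ^ 2 :=
    (Real.sq_sqrt (aux_pos k η t hk).le).symm
  have hk2 : k ^ 2 = Real.sqrt (pfun k η t) ^ 2 - (η - k * t) ^ 2 := by
    rw [← hpq]; unfold pfun; ring
  have hk3 : k ^ 3 = k * (Real.sqrt (pfun k η t) ^ 2 - (η - k * t) ^ 2) := by
    rw [← hk2]; ring
  refine ((aux_xi k η t).div hq hq0).congr_deriv ?_
  rw [hk3]
  field_simp
  ring

lemma aux_w_abs (k η t : ℝ) (hk : k ≠ 0) :
    |(η - k * t) / Real.sqrt (pfun k η t)| ≤ 1 := by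
  have hq := Real.sqrt_pos.2 (aux_pos k η t hk)
  rw [abs_div, abs_of_pos hq, div_le_one hq]
  apply Real.abs_le_sqrt
  unfold pfun; nlinarith [sq_nonneg k]

lemma aux_cross (S q u v a b : ℝ) (hS : 0 < S) (hq : 0 < q) :
    |a * v - b * u| ≤ 1 / (2 * S) * ((u ^ 2 + v ^ 2) / q + S ^ 2 * q * (a ^ 2 + b ^ 2)) := by
  have e : 1 / (2 * S) * ((u ^ 2 + v ^ 2) / q + S ^ 2 * q * (a ^ 2 + b ^ 2))
      = ((u ^ 2 + v ^ 2) + (S * q) ^ 2 * (a ^ 2 + b ^ 2)) / (2 * (S * q)) := by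
    field_simp
  have hz : 0 < S * q := by positivity
  rw [e, le_div_iff₀ (by positivity)]
  generalize S * q = z at *
  rcases abs_cases (a * v - b * u) with ⟨h, _⟩ | ⟨h, _⟩ <;> rw [h]
  · nlinarith [sq_nonneg (v - z * a), sq_nonneg (u + z * b)]
  · nlinarith [sq_nonneg (v + z * a), sq_nonneg (u - z * b)]

lemma aux_P (k η t : ℝ) :
    HasDerivAt (fun s => k ^ 2 * s + (η ^ 2 * s - η * k * s ^ 2 + k ^ 2 * s ^ 3 / 3))
      (pfun k η t) t := by
  have h1 := (hasDerivAt_id t)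
  have h := (h1.const_mul (k ^ 2)).add (((h1.const_mul (η ^ 2)).sub
    ((h1.pow 2).const_mul (η * k))).add (((h1.pow 3).const_mul (k ^ 2)).div_const 3))
  refine HasDerivAt.congr_deriv h ?_
  unfold pfun
  simp
  ring

set_option maxHeartbeats 1000000 in
/-- Core energy decay. -/
lemma aux_decay (S ε ν κ μ k η : ℝ) (hS : 1 / 2 < S) (hε : 0 < ε)
    (hμ : 0 < μ) (hμν : μ ≤ ν) (hμκ : μ ≤ κ)
    (hmin : ∃ m, m ≤ ν ∧ m ≤ κ ∧ μ ≤ m ∧ ν + κ ≤ (4 * S - ε) * m)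
    (hk : k ≠ 0) (u v a b : ℝ → ℝ)
    (hu : ∀ t, 0 ≤ t → HasDerivAt u (-(ν * pfun k η t) * u t + S ^ 2 * k * b t) t)
    (hv : ∀ t, 0 ≤ t → HasDerivAt v (-(ν * pfun k η t) * v t - S ^ 2 * k * a t) t)
    (ha : ∀ t, 0 ≤ t → HasDerivAt a (-(κ * pfun k η t) * a t + k / pfun k η t * v t) t)
    (hb : ∀ t, 0 ≤ t → HasDerivAt b (-(κ * pfun k η t) * b t - k / pfun k η t * u t) t)
    (t : ℝ) (ht : 0 ≤ t) :
    (1 - 1 / (2 * S)) * ((u t ^ 2 + v t ^ 2) / Real.sqrt (pfun k η t)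
        + S ^ 2 * Real.sqrt (pfun k η t) * (a t ^ 2 + b t ^ 2))
      ≤ Real.exp (2 * (1 / (2 * S) / (1 - 1 / (2 * S))))
        * Real.exp (-(ε / (4 * S) / 12 * (μ * k ^ 2 * t ^ 3)))
        * (2 * ((u 0 ^ 2 + v 0 ^ 2) / Real.sqrt (pfun k η 0)
        + S ^ 2 * Real.sqrt (pfun k η 0) * (a 0 ^ 2 + b 0 ^ 2))) := by
  set r := 1 / (2 * S) with hr
  have hr0 : 0 < r := by positivity
  have hr1 : r < 1 := by rw [hr, div_lt_one (by linarith)]; linarith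
  set A := r / (1 - r) with hA
  have hA0 : 0 < A := div_pos hr0 (by linarith)
  set B := ε / (4 * S) with hB
  have hB0 : 0 < B := by positivity
  have hBr : B = ε * r / 2 := by rw [hB, hr]; field_simp; ring
  set σ := |k| / k with hσ
  have hσa : |σ| = 1 := by rw [hσ, abs_div, abs_abs, div_self (abs_pos.2 hk).ne']
  set T : ℝ → ℝ := fun t => (u t ^ 2 + v t ^ 2) / Real.sqrt (pfun k η t)
        + S ^ 2 * Real.sqrt (pfun k η t) * (a t ^ 2 + b t ^ 2) with hT
  set X : ℝ → ℝ := fun t => a t * v t - b t * u t with hX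
  set w : ℝ → ℝ := fun s => (η - k * s) / Real.sqrt (pfun k η s) with hw
  have hw1 : ∀ s, |w s| ≤ 1 := fun s => aux_w_abs k η s hk
  have hT0 : ∀ s, 0 ≤ T s := fun s => by simp only [hT]; positivity
  have hXT : ∀ s, |X s| ≤ r * T s := fun s =>
    aux_cross S _ _ _ _ _ (by linarith) (Real.sqrt_pos.2 (aux_pos k η s hk))
  have hE : ∀ s, auxE (S ^ 2) k η u v a b s = T s - w s * X s := fun s => rfl
  have hwX : ∀ s, |w s * X s| ≤ r * T s := fun s => by
    rw [abs_mul]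
    nlinarith [hw1 s, hXT s, abs_nonneg (X s)]
  have hElow : ∀ s, (1 - r) * T s ≤ auxE (S ^ 2) k η u v a b s := fun s => by
    rw [hE]; nlinarith [le_abs_self (w s * X s), hwX s]
  have hEup : ∀ s, auxE (S ^ 2) k η u v a b s ≤ 2 * T s := fun s => by
    rw [hE]; nlinarith [neg_abs_le (w s * X s), hwX s, hT0 s]
  set P : ℝ → ℝ := fun s => k ^ 2 * s + (η ^ 2 * s - η * k * s ^ 2 + k ^ 2 * s ^ 3 / 3) with hP
  set L : ℝ → ℝ := fun s => B * μ * P s + A * (σ * w s) with hL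
  have hLd : ∀ s, HasDerivAt L (B * μ * pfun k η s
      + A * (σ * (-(k ^ 3 / Real.sqrt (pfun k η s) ^ 3)))) s := fun s =>
    ((aux_P k η s).const_mul (B * μ)).add (((aux_w k η s hk).const_mul σ).const_mul A)
  obtain ⟨m, hmν, hmκ, hμm, hsum⟩ := hmin
  have hanti : AntitoneOn (fun s => auxE (S ^ 2) k η u v a b s * Real.exp (L s)) (Set.Ici 0) := by
    have hd : ∀ s, 0 ≤ s → HasDerivAt
        (fun s => auxE (S ^ 2) k η u v a b s * Real.exp (L s)) _ s := fun s hs =>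
      (auxE_deriv (S ^ 2) ν κ k η s hk u v a b (hu s hs) (hv s hs) (ha s hs) (hb s hs)).mul
        (hLd s).exp
    apply antitoneOn_of_deriv_nonpos (convex_Ici 0)
    · exact fun s hs => (hd s hs).continuousAt.continuousWithinAt
    · intro s hs
      rw [interior_Ici] at hs
      exact (hd s hs.le).differentiableAt.differentiableWithinAt
    · intro s hs
      rw [interior_Ici] at hs
      rw [(hd s hs.le).deriv]
      have hσk : σ * (-(k ^ 3 / Real.sqrt (pfun k η s) ^ 3))
          = -(|k| ^ 3 / Real.sqrt (pfun k η s) ^ 3) := by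
        rw [hσ]
        have : |k| ^ 3 = |k| * k ^ 2 := by rw [← sq_abs k]; ring
        rw [this]; field_simp
      rw [hσk]
      have hp := aux_pos k η s hk
      have hq := Real.sqrt_pos.2 hp
      have hg : |k ^ 3 / Real.sqrt (pfun k η s) ^ 3| = |k| ^ 3 / Real.sqrt (pfun k η s) ^ 3 := by
        rw [abs_div, abs_pow, abs_of_pos (pow_pos hq 3)]
      set g := |k| ^ 3 / Real.sqrt (pfun k η s) ^ 3 with hgdef
      have hg0 : 0 ≤ g := by rw [hgdef]; positivity
      set Y1 := (u s ^ 2 + v s ^ 2) / Real.sqrt (pfun k η s) with hY1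
      set Y2 := S ^ 2 * Real.sqrt (pfun k η s) * (a s ^ 2 + b s ^ 2) with hY2
      have hY10 : 0 ≤ Y1 := by rw [hY1]; positivity
      have hY20 : 0 ≤ Y2 := by rw [hY2]; positivity
      have hTs : T s = Y1 + Y2 := rfl
      set g' := k ^ 3 / Real.sqrt (pfun k η s) ^ 3 with hg'
      have hws : (η - k * s) / Real.sqrt (pfun k η s) = w s := rfl
      have hXs : a s * v s - b s * u s = X s := rfl
      rw [hws, hXs]
      set p := pfun k η s with hpdef
      have hgX : g' * X s ≤ g * (r * T s) := by
        calc g' * X s ≤ |g' * X s| := le_abs_self _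
          _ = g * |X s| := by rw [abs_mul, hg]
          _ ≤ _ := mul_le_mul_of_nonneg_left (hXT s) hg0
      have h1 : (ν + κ) * p * (w s * X s) ≤ (4 * S - ε) * m * p * (r * T s) := by
        have : (ν + κ) * p * (w s * X s) ≤ (ν + κ) * p * (r * T s) :=
          mul_le_mul_of_nonneg_left ((le_abs_self _).trans (hwX s))
            (mul_nonneg (by linarith) hp.le)
        refine this.trans ?_
        apply mul_le_mul_of_nonneg_right _ (mul_nonneg hr0.le (hT0 s))
        exact mul_le_mul_of_nonneg_right hsum hp.le
      have h2 : m * p * Y1 ≤ ν * p * Y1 := by gcongr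
      have h3 : m * p * Y2 ≤ κ * p * Y2 := by gcongr
      have hSr : S * r = 1 / 2 := by rw [hr]; field_simp
      have h4 : (4 * S - ε) * m * p * (r * T s) = 2 * (m * p * T s) - ε * r * (m * p * T s) := by
        linear_combination 4 * m * p * T s * hSr
      have h5 : μ * p * T s ≤ m * p * T s := by
        have := hT0 s
        gcongr
      have h6 : B * μ * p * auxE (S ^ 2) k η u v a b s ≤ ε * r * (m * p * T s) := by
        have : B * μ * p * auxE (S ^ 2) k η u v a b s ≤ B * μ * p * (2 * T s) :=
          mul_le_mul_of_nonneg_left (hEup s) (by positivity)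
        have h7 : ε * r * (μ * p * T s) ≤ ε * r * (m * p * T s) := by gcongr
        rw [hBr] at this
        rw [hBr]
        linarith
      have h8 : g * (r * T s) ≤ A * g * auxE (S ^ 2) k η u v a b s := by
        have : A * g * ((1 - r) * T s) ≤ A * g * auxE (S ^ 2) k η u v a b s :=
          mul_le_mul_of_nonneg_left (hElow s) (by positivity)
        have h9 : A * (1 - r) = r := by rw [hA]; field_simp [(by linarith : (1 - r) ≠ 0)]
        calc g * (r * T s) = A * g * ((1 - r) * T s) := by
              linear_combination (-(g * T s)) * h9
          _ ≤ _ := this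
      have hex := Real.exp_pos (L s)
      have key : (-2 * ν * p * Y1 - 2 * κ * p * Y2 + ((ν + κ) * p * w s + g') * X s)
          + auxE (S ^ 2) k η u v a b s * (B * μ * p + A * -g) ≤ 0 := by
        have e : m * p * T s = m * p * Y1 + m * p * Y2 := by rw [hTs]; ring
        have e2 : (-2 * ν * p * Y1 - 2 * κ * p * Y2 + ((ν + κ) * p * w s + g') * X s)
            + auxE (S ^ 2) k η u v a b s * (B * μ * p + A * -g)
            = -2 * (ν * p * Y1) - 2 * (κ * p * Y2) + (ν + κ) * p * (w s * X s) + g' * X s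
              + B * μ * p * auxE (S ^ 2) k η u v a b s
              - A * g * auxE (S ^ 2) k η u v a b s := by ring
        rw [e2]
        linarith only [e, h1, h2, h3, h4, h6, h8, hgX]
      calc _ = ((-2 * ν * p * Y1 - 2 * κ * p * Y2 + ((ν + κ) * p * w s + g') * X s)
          + auxE (S ^ 2) k η u v a b s * (B * μ * p + A * -g)) * Real.exp (L s) := by ring
        _ ≤ 0 := mul_nonpos_of_nonpos_of_nonneg key hex.le
  have hfin := hanti (Set.mem_Ici.2 le_rfl) (Set.mem_Ici.2 ht) ht
  simp only at hfin
  have hσw : ∀ s, |σ * w s| ≤ 1 := fun s => by rw [abs_mul, hσa, one_mul]; exact hw1 s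
  have hPt : k ^ 2 * t ^ 3 / 12 ≤ P t := by
    have : P t - k ^ 2 * t ^ 3 / 12 = k ^ 2 * t + t * (η - k * t / 2) ^ 2 := by
      simp only [hP]; ring
    have : 0 ≤ k ^ 2 * t + t * (η - k * t / 2) ^ 2 := by positivity
    linarith
  have hLt : L 0 - L t ≤ 2 * A + -(B / 12 * (μ * k ^ 2 * t ^ 3)) := by
    have hP0 : P 0 = 0 := by simp [hP]
    simp only [hL]
    rw [hP0]
    have h1 := abs_le.1 (hσw 0)
    have h2 := abs_le.1 (hσw t)
    have h3 : B * μ * (k ^ 2 * t ^ 3 / 12) ≤ B * μ * P t :=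
      mul_le_mul_of_nonneg_left hPt (by positivity)
    nlinarith
  have hE1 : auxE (S ^ 2) k η u v a b t
      ≤ Real.exp (L 0 - L t) * auxE (S ^ 2) k η u v a b 0 := by
    rw [Real.exp_sub, div_mul_eq_mul_div, le_div_iff₀ (Real.exp_pos _)]
    linarith
  have hE0 : 0 ≤ auxE (S ^ 2) k η u v a b 0 :=
    le_trans (mul_nonneg (by linarith) (hT0 0)) (hElow 0)
  rw [← Real.exp_add]
  calc _ ≤ auxE (S ^ 2) k η u v a b t := hElow t
    _ ≤ _ := hE1
    _ ≤ Real.exp (2 * A + -(B / 12 * (μ * k ^ 2 * t ^ 3))) * auxE (S ^ 2) k η u v a b 0 :=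
        mul_le_mul_of_nonneg_right (Real.exp_le_exp.2 hLt) hE0
    _ ≤ _ := mul_le_mul_of_nonneg_left (hEup 0) (Real.exp_pos _).le

lemma aux_poly (s : ℝ) (hs : 0 ≤ s) : s ≤ 1 + s ^ 3 ∧ s ^ 2 ≤ 1 + s ^ 3 := by
  constructor
  · nlinarith [mul_nonneg hs (sq_nonneg (s - 1)), sq_nonneg (s - 1)]
  · nlinarith [mul_nonneg hs (sq_nonneg (s - 1)), sq_nonneg (s - 1)]

/-- Rate and weight comparison with `x = μ k² t³`. -/
lemma aux_rates (ν μ k t : ℝ) (hμ : 0 < μ) (hμν : μ ≤ ν) (hk : k ≠ 0) (ht : 0 ≤ t) :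
    lamDef ν μ k * t ≤ 1 + μ * k ^ 2 * t ^ 3 ∧
    (alphaDef μ k) ^ 2 * (k * t) ^ 2 ≤ 1 + μ * k ^ 2 * t ^ 3 := by
  have hk0 := abs_pos.2 hk
  unfold lamDef alphaDef
  by_cases h : μ ≤ |k|
  · rw [if_pos h, if_neg (not_lt.2 h)]
    have ha : 0 < μ ^ ((1 : ℝ) / 3) := Real.rpow_pos_of_pos hμ _
    have hb : 0 < |k| ^ ((1 : ℝ) / 3) := Real.rpow_pos_of_pos hk0 _
    have hab : μ ^ ((1 : ℝ) / 3) ≤ |k| ^ ((1 : ℝ) / 3) :=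
      Real.rpow_le_rpow hμ.le h (by norm_num)
    have e1 : μ = (μ ^ ((1 : ℝ) / 3)) ^ 3 := by
      rw [← Real.rpow_natCast, ← Real.rpow_mul hμ.le]; norm_num
    have e2 : |k| = (|k| ^ ((1 : ℝ) / 3)) ^ 3 := by
      rw [← Real.rpow_natCast, ← Real.rpow_mul hk0.le]; norm_num
    have e3 : μ ^ ((2 : ℝ) / 3) = (μ ^ ((1 : ℝ) / 3)) ^ 2 := by
      rw [← Real.rpow_natCast, ← Real.rpow_mul hμ.le]; norm_num
    have e4 : |k| ^ ((2 : ℝ) / 3) = (|k| ^ ((1 : ℝ) / 3)) ^ 2 := by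
      rw [← Real.rpow_natCast, ← Real.rpow_mul hk0.le]; norm_num
    have e5 : |k| ^ (-(2 : ℝ) / 3) = ((|k| ^ ((1 : ℝ) / 3)) ^ 2)⁻¹ := by
      rw [← e4, ← Real.rpow_neg hk0.le]; norm_num
    rw [e3, e4, e5, mul_pow k t, ← sq_abs k]
    generalize μ ^ ((1 : ℝ) / 3) = c at *
    generalize |k| ^ ((1 : ℝ) / 3) = d at *
    rw [e1, e2]
    have hs : 0 ≤ c * d ^ 2 * t := by positivity
    obtain ⟨h1, h2⟩ := aux_poly _ hs
    have e6 : c ^ 3 * (d ^ 3) ^ 2 * t ^ 3 = (c * d ^ 2 * t) ^ 3 := by ring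
    rw [e6]
    refine ⟨h1, le_trans ?_ h2⟩
    have e7 : (c ^ 2 * (d ^ 2)⁻¹) ^ 2 * ((d ^ 3) ^ 2 * t ^ 2) = c ^ 2 * c ^ 2 * (d ^ 2 * t ^ 2) := by
      field_simp
    rw [e7]
    have e8 : (c * d ^ 2 * t) ^ 2 = c ^ 2 * d ^ 2 * (d ^ 2 * t ^ 2) := by ring
    rw [e8]
    gcongr
  · have h' := not_le.1 h
    rw [if_neg h, if_pos h']
    have hk2 : k ^ 2 ≤ μ ^ 2 := by rw [← sq_abs k]; gcongr
    by_cases htm : μ * t ≤ 1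
    · have hx : 0 ≤ μ * k ^ 2 * t ^ 3 := by positivity
      have hmt : 0 ≤ μ * t := by positivity
      constructor
      · have : k ^ 2 / ν * t ≤ 1 := by
          rw [div_mul_eq_mul_div, div_le_one (by linarith)]
          calc k ^ 2 * t ≤ μ ^ 2 * t := by gcongr
            _ = μ * (μ * t) := by ring
            _ ≤ μ * 1 := by gcongr
            _ ≤ ν := by linarith
        linarith
      · have : (k * t) ^ 2 ≤ 1 := by
          calc (k * t) ^ 2 = k ^ 2 * t ^ 2 := by ring
            _ ≤ μ ^ 2 * t ^ 2 := by gcongr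
            _ = (μ * t) ^ 2 := by ring
            _ ≤ 1 := pow_le_one₀ hmt htm
        linarith
    · have h1 : 1 ≤ μ * t := (not_le.1 htm).le
      constructor
      · have : k ^ 2 / ν * t ≤ μ * k ^ 2 * t ^ 3 := by
          rw [div_mul_eq_mul_div, div_le_iff₀ (by linarith)]
          calc k ^ 2 * t = k ^ 2 * t * (1 * 1) := by ring
            _ ≤ k ^ 2 * t * ((μ * t) * (μ * t)) := by gcongr
            _ = μ * k ^ 2 * t ^ 3 * μ := by ring
            _ ≤ _ := by gcongr
        linarith
      · have : (k * t) ^ 2 ≤ μ * k ^ 2 * t ^ 3 := by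
          calc (k * t) ^ 2 = (k * t) ^ 2 * 1 := by ring
            _ ≤ (k * t) ^ 2 * (μ * t) := by gcongr
            _ = _ := by ring
        linarith

lemma aux_norm (x : ℝ) (z : ℂ) :
    ‖(1 + (x : ℂ) * Complex.I) * z‖ ^ 2 = (1 + x ^ 2) * (z.re ^ 2 + z.im ^ 2) := by
  rw [norm_mul, mul_pow, Complex.sq_norm, Complex.sq_norm, Complex.normSq_apply,
    Complex.normSq_apply]
  simp
  ring

set_option maxHeartbeats 2000000 in
/-- pointwise viscous decay with hypocoercive correction:
for `R > 1/4`, `ε ∈ (0,1/2)` there exist positive constants `c₁, c₂, C`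
depending only on `R, ε` such that for all admissible `ν, κ`, all `k ≠ 0`, `η`,
and every solution of `Ω′ = −νpΩ − R·i·k·Θ`, `Θ′ = −κpΘ − (i·k/p)·Ω`, one has
for all `t ≥ 0`
`p^{−1/2}|(1+c₂αi(η−kt))Ω(t)|² + p^{1/2}|(1+c₂αi(η−kt))Θ(t)|²
  ≤ C·e^{−c₁λt}·[(k²+η²)^{−1/2}|(1+c₂αiη)Ω(0)|² + (k²+η²)^{1/2}|(1+c₂αiη)Θ(0)|²]`. -/
theorem stmt9 (R ε : ℝ) (hR : 1 / 4 < R) (hε : ε ∈ Set.Ioo (0 : ℝ) (1 / 2)) :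
    ∃ c₁ c₂ C : ℝ, 0 < c₁ ∧ 0 < c₂ ∧ 0 < C ∧
      ∀ ν κ : ℝ, ν ∈ Set.Ioo (0 : ℝ) 1 → κ ∈ Set.Ioo (0 : ℝ) 1 →
        max ν κ / min ν κ ≤ 4 * Real.sqrt R - 1 - ε →
        ∀ k η : ℝ, k ≠ 0 → ∀ Ω Θ : ℝ → ℂ,
          (∀ t : ℝ, 0 ≤ t →
            HasDerivAt Ω
              (-((ν * pfun k η t : ℝ) : ℂ) * Ω t
                - (R : ℂ) * Complex.I * (k : ℂ) * Θ t) t ∧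
            HasDerivAt Θ
              (-((κ * pfun k η t : ℝ) : ℂ) * Θ t
                - Complex.I * (k : ℂ) / ((pfun k η t : ℝ) : ℂ) * Ω t) t) →
          ∀ t : ℝ, 0 ≤ t →
            pfun k η t ^ (-(1 : ℝ) / 2)
                * ‖(1 + ((c₂ * alphaDef (muDef R ν κ) k * (η - k * t) : ℝ) : ℂ)
                      * Complex.I) * Ω t‖ ^ 2
              + pfun k η t ^ ((1 : ℝ) / 2)
                * ‖(1 + ((c₂ * alphaDef (muDef R ν κ) k * (η - k * t) : ℝ) : ℂ)
                      * Complex.I) * Θ t‖ ^ 2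
            ≤ C * Real.exp (-(c₁ * lamDef ν (muDef R ν κ) k * t))
                * ((k ^ 2 + η ^ 2) ^ (-(1 : ℝ) / 2)
                    * ‖(1 + ((c₂ * alphaDef (muDef R ν κ) k * η : ℝ) : ℂ)
                          * Complex.I) * Ω 0‖ ^ 2
                  + (k ^ 2 + η ^ 2) ^ ((1 : ℝ) / 2)
                    * ‖(1 + ((c₂ * alphaDef (muDef R ν κ) k * η : ℝ) : ℂ)
                          * Complex.I) * Θ 0‖ ^ 2) := by
  obtain ⟨hε0, hε1⟩ := hε
  set S := Real.sqrt R with hSdef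
  have hS2 : S ^ 2 = R := Real.sq_sqrt (by linarith)
  have hS : 1 / 2 < S := by
    rw [hSdef]; apply Real.lt_sqrt_of_sq_lt; norm_num; linarith
  have hS0 : 0 < S := by linarith
  set r := 1 / (2 * S) with hr
  have hr0 : 0 < r := by positivity
  have hr1 : r < 1 := by rw [hr, div_lt_one (by linarith)]; linarith
  have h1r : 0 < 1 - r := by linarith
  set d := ε / (4 * S) / 12 with hd
  have hd0 : 0 < d := by positivity
  set K := Real.exp (2 * (r / (1 - r))) with hK
  have hK0 : 0 < K := Real.exp_pos _
  refine ⟨d / 2, 1, 4 / (1 - r) * K * 2 * (1 + R) * (3 + 4 / d) * Real.exp (d / 2),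
    by positivity, one_pos, by positivity, ?_⟩
  intro ν κ hν hκ hrat k η hk Ω Θ hsol t ht
  set m := min ν κ with hm
  set M := max ν κ with hM
  have hm0 : 0 < m := lt_min hν.1 hκ.1
  have hsum : ν + κ ≤ (4 * S - ε) * m := by
    have h1 : M ≤ (4 * S - 1 - ε) * m := (div_le_iff₀ hm0).1 hrat
    have h2 : m + M = ν + κ := min_add_max ν κ
    linarith
  set μ := muDef R ν κ with hμdef
  have hμe : μ = m * (1 - 1 / (4 * S) - 1 / (4 * S) * (M / m)) := rfl
  have hr4 : 0 < 1 / (4 * S) := by positivity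
  have hSr4 : 1 / (4 * S) * (4 * S) = 1 := by field_simp
  have hμ0 : 0 < μ := by
    rw [hμe]
    apply mul_pos hm0
    have : 1 / (4 * S) * (M / m) ≤ 1 / (4 * S) * (4 * S - 1 - ε) :=
      mul_le_mul_of_nonneg_left hrat hr4.le
    nlinarith [mul_pos hr4 hε0]
  have hμm : μ ≤ m := by
    rw [hμe]
    have : 0 ≤ M / m := div_nonneg (hm0.le.trans (min_le_max)) hm0.le
    have : 0 ≤ 1 / (4 * S) * (M / m) := by positivity
    nlinarith
  have hmν : m ≤ ν := min_le_left _ _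
  have hmκ : m ≤ κ := min_le_right _ _
  have hre : ∀ (f : ℝ → ℂ) (f' : ℂ) (s : ℝ), HasDerivAt f f' s →
      HasDerivAt (fun x => (f x).re) f'.re s := fun f f' s h =>
    Complex.reCLM.hasFDerivAt.comp_hasDerivAt s h
  have him : ∀ (f : ℝ → ℂ) (f' : ℂ) (s : ℝ), HasDerivAt f f' s →
      HasDerivAt (fun x => (f x).im) f'.im s := fun f f' s h =>
    Complex.imCLM.hasFDerivAt.comp_hasDerivAt s h
  have hdec := aux_decay S ε ν κ μ k η hS hε0 hμ0 (hμm.trans hmν) (hμm.trans hmκ)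
    ⟨m, hmν, hmκ, hμm, hsum⟩ hk (fun s => (Ω s).re) (fun s => (Ω s).im)
    (fun s => (Θ s).re) (fun s => (Θ s).im)
    (fun s hs => (hre _ _ s (hsol s hs).1).congr_deriv (by
      rw [hS2]
      simp [-Complex.ofReal_mul] ))
    (fun s hs => (him _ _ s (hsol s hs).1).congr_deriv (by
      rw [hS2]
      simp [-Complex.ofReal_mul] ))
    (fun s hs => (hre _ _ s (hsol s hs).2).congr_deriv (by
      simp [-Complex.ofReal_mul, Complex.div_ofReal_re, Complex.div_ofReal_im] ))
    (fun s hs => (him _ _ s (hsol s hs).2).congr_deriv (by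
      simp [-Complex.ofReal_mul, Complex.div_ofReal_re, Complex.div_ofReal_im] ))
    t ht
  rw [hS2] at hdec
  obtain ⟨hlam, halp⟩ := aux_rates ν μ k t hμ0 (hμm.trans hmν) hk ht
  have hp0 : k ^ 2 + η ^ 2 = pfun k η 0 := by unfold pfun; ring
  rw [hp0]
  have hpow1 : ∀ s, pfun k η s ^ (-(1 : ℝ) / 2) = (Real.sqrt (pfun k η s))⁻¹ := fun s => by
    rw [neg_div, Real.rpow_neg (aux_pos k η s hk).le, Real.sqrt_eq_rpow]
  have hpow2 : ∀ s, pfun k η s ^ ((1 : ℝ) / 2) = Real.sqrt (pfun k η s) := fun s => by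
    rw [Real.sqrt_eq_rpow]
  rw [hpow1, hpow1, hpow2, hpow2]
  simp only [aux_norm]
  set α := alphaDef μ k with hα
  set x := μ * k ^ 2 * t ^ 3 with hx
  have hx0 : 0 ≤ x := by positivity
  have hq0 := Real.sqrt_pos.2 (aux_pos k η 0 hk)
  have hqt := Real.sqrt_pos.2 (aux_pos k η t hk)
  set q0 := Real.sqrt (pfun k η 0)
  set qt := Real.sqrt (pfun k η t)
  set U0 := (Ω 0).re ^ 2 + (Ω 0).im ^ 2 with hU0
  set V0 := (Θ 0).re ^ 2 + (Θ 0).im ^ 2 with hV0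
  set Ut := (Ω t).re ^ 2 + (Ω t).im ^ 2 with hUt
  set Vt := (Θ t).re ^ 2 + (Θ t).im ^ 2 with hVt
  have hU00 : 0 ≤ U0 := by positivity
  have hV00 : 0 ≤ V0 := by positivity
  have hUt0 : 0 ≤ Ut := by positivity
  have hVt0 : 0 ≤ Vt := by positivity
  set Mt := qt⁻¹ * Ut + qt * Vt with hMt
  set M0 := q0⁻¹ * U0 + q0 * V0 with hM0
  have hM00 : 0 ≤ M0 := by positivity
  have hMt0 : 0 ≤ Mt := by positivity
  have hlow : Mt / 4 ≤ Ut / qt + R * qt * Vt := by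
    rw [hMt, div_eq_inv_mul Ut qt]
    have h1 : 0 ≤ qt⁻¹ * Ut := by positivity
    have h2 : 0 ≤ qt * Vt := by positivity
    nlinarith
  have hup : U0 / q0 + R * q0 * V0 ≤ (1 + R) * M0 := by
    rw [hM0, div_eq_inv_mul U0 q0]
    have h1 : 0 ≤ q0⁻¹ * U0 := by positivity
    have h2 : 0 ≤ q0 * V0 := by positivity
    nlinarith
  have hMdec : Mt ≤ 4 / (1 - r) * K * 2 * (1 + R) * Real.exp (-(d * x)) * M0 := by
    have h1 : (1 - r) * (Mt / 4) ≤ K * Real.exp (-(d * x)) * (2 * ((1 + R) * M0)) := by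
      calc _ ≤ _ := mul_le_mul_of_nonneg_left hlow h1r.le
        _ ≤ _ := hdec
        _ ≤ _ := by gcongr
    have h2 : Mt = 4 / (1 - r) * ((1 - r) * (Mt / 4)) := by field_simp
    rw [h2]
    calc _ ≤ 4 / (1 - r) * (K * Real.exp (-(d * x)) * (2 * ((1 + R) * M0))) := by gcongr
      _ = _ := by ring
  have hwt : 1 + (1 * α * (η - k * t)) ^ 2 ≤ (3 + 2 * x) * (1 + (1 * α * η) ^ 2) := by
    have h1 : (α * (η - k * t)) ^ 2 ≤ 2 * (α * η) ^ 2 + 2 * (α ^ 2 * (k * t) ^ 2) := by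
      nlinarith [sq_nonneg (α * (η + k * t))]
    have h2 := mul_nonneg hx0 (sq_nonneg (α * η))
    rw [one_mul]
    nlinarith [sq_nonneg (α * η)]
  have hexp : (3 + 2 * x) * Real.exp (-(d * x))
      ≤ (3 + 4 / d) * Real.exp (d / 2) * Real.exp (-(d / 2 * lamDef ν μ k * t)) := by
    have h1 : 3 + 2 * x ≤ (3 + 4 / d) * Real.exp (d / 2 * x) := by
      have ha : d / 2 * x + 1 ≤ Real.exp (d / 2 * x) := Real.add_one_le_exp _
      have hb : (3 + 4 / d) * (d / 2 * x + 1) ≤ (3 + 4 / d) * Real.exp (d / 2 * x) := by gcongr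
      have hc : (3 + 4 / d) * (d / 2 * x + 1) = 3 + 2 * x + (3 * (d / 2 * x) + 4 / d) := by
        field_simp; ring
      have : 0 ≤ 3 * (d / 2 * x) + 4 / d := by positivity
      linarith
    calc _ ≤ (3 + 4 / d) * Real.exp (d / 2 * x) * Real.exp (-(d * x)) := by gcongr
      _ = (3 + 4 / d) * Real.exp (-(d / 2 * x)) := by
        rw [mul_assoc, ← Real.exp_add]; ring_nf
      _ ≤ (3 + 4 / d) * Real.exp (d / 2 + -(d / 2 * lamDef ν μ k * t)) := by
        have : -(d / 2 * x) ≤ d / 2 + -(d / 2 * lamDef ν μ k * t) := by nlinarith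
        gcongr
      _ = _ := by rw [Real.exp_add]; ring
  have hW0 : 0 ≤ 1 + (1 * α * η) ^ 2 := by positivity
  calc _ = (1 + (1 * α * (η - k * t)) ^ 2) * Mt := by rw [hMt]; ring
    _ ≤ ((3 + 2 * x) * (1 + (1 * α * η) ^ 2))
        * (4 / (1 - r) * K * 2 * (1 + R) * Real.exp (-(d * x)) * M0) := by gcongr
    _ = ((3 + 2 * x) * Real.exp (-(d * x)))
        * (4 / (1 - r) * K * 2 * (1 + R) * ((1 + (1 * α * η) ^ 2) * M0)) := by ring
    _ ≤ ((3 + 4 / d) * Real.exp (d / 2) * Real.exp (-(d / 2 * lamDef ν μ k * t)))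
        * (4 / (1 - r) * K * 2 * (1 + R) * ((1 + (1 * α * η) ^ 2) * M0)) := by gcongr
    _ = _ := by rw [hM0]; ring
end
end

section
/- There exists a constant C depending only on m and δ such that for every measurable Z : ℝ² → ℂ the following three estimates hold: (i) ‖⟨k⟩^{−1/2}·Z‖_{L¹(ℝ²)} ≤ C·‖⟨k⟩^m·min(|k|^{1/4},1)·Z‖_{L²_k L¹_η} ≤ C·μ^{−1/4}·D_γ^{1/4}·( E^{1/2} + μ^{−δ}·D_γ^{δ}·E^{1/2−2δ} ); (ii) ‖⟨k⟩^m·Z‖_{L²_k L¹_η} ≤ C·( μ^{−1/8}·D_γ^{1/8}·E^{3/4} + μ^{−1/4−δ}·D_γ^{1/4+δ}·E^{1/2−2δ} ); (iii) ‖A(k)^{2δ}·⟨k⟩^{−1/2}·Z‖_{L¹(ℝ²)} ≤ C·μ^{−1/4}·(1 + μ^{−δ})·D_γ^{1/4}·E^{1/2}. -/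
open MeasureTheory Real
open scoped ENNReal NNReal

noncomputable section

/-- The Japanese bracket `⟨k⟩ = (1+k²)^{1/2}`. -/
def jap (k : ℝ) : ℝ := Real.sqrt (1 + k ^ 2)

/-- The moving-frame symbol `p(k,η) = k² + (η − kt)²`. -/
def pw (t k η : ℝ) : ℝ := k ^ 2 + (η - k * t) ^ 2

/-- The weight `A(k)`. -/
def Aw (μ k : ℝ) : ℝ :=
  if |k| < μ then 1 else μ ^ ((1 : ℝ) / 3) * |k| ^ (-(1 : ℝ) / 3)

/-- The weight `B(k)`. -/
def Bw (μ k : ℝ) : ℝ :=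
  if |k| < μ then μ ^ (-(1 : ℝ) / 2) else μ ^ ((1 : ℝ) / 6) * |k| ^ (-(2 : ℝ) / 3)

/-- Weighted `L¹(ℝ²)` norm `‖w·Z‖_{L¹}` (iterated, value in `[0,∞]`). -/
def L1n (w : ℝ → ℝ → ℝ) (Z : ℝ × ℝ → ℂ) : ℝ≥0∞ :=
  ∫⁻ k : ℝ, ∫⁻ η : ℝ, ENNReal.ofReal (w k η) * (‖Z (k, η)‖₊ : ℝ≥0∞)

/-- Weighted `L²(ℝ²)` norm `‖w·Z‖_{L²}` (value in `[0,∞]`). -/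
def L2n (w : ℝ → ℝ → ℝ) (Z : ℝ × ℝ → ℂ) : ℝ≥0∞ :=
  (∫⁻ k : ℝ, ∫⁻ η : ℝ,
      (ENNReal.ofReal (w k η) * (‖Z (k, η)‖₊ : ℝ≥0∞)) ^ 2) ^ ((1 : ℝ) / 2)

/-- Weighted mixed norm `‖w·Z‖_{L²_k L¹_η}` (value in `[0,∞]`). -/
def L2L1n (w : ℝ → ℝ → ℝ) (Z : ℝ × ℝ → ℂ) : ℝ≥0∞ :=
  (∫⁻ k : ℝ,
      (∫⁻ η : ℝ, ENNReal.ofReal (w k η) * (‖Z (k, η)‖₊ : ℝ≥0∞)) ^ 2) ^ ((1 : ℝ) / 2)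

/-- The energy `E = ‖⟨k⟩^m Z‖_{L²} + ‖⟨k⟩^m A(k)(η−kt) Z‖_{L²}`. -/
def En (t μ m : ℝ) (Z : ℝ × ℝ → ℂ) : ℝ≥0∞ :=
  L2n (fun k _ => jap k ^ m) Z + L2n (fun k η => jap k ^ m * Aw μ k * |η - k * t|) Z

/-- The dissipation `D_γ = μ·∬ ⟨k⟩^{2m} p |Z|²`. -/
def Dg (t μ m : ℝ) (Z : ℝ × ℝ → ℂ) : ℝ≥0∞ :=
  ENNReal.ofReal μ * ∫⁻ k : ℝ, ∫⁻ η : ℝ,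
    ENNReal.ofReal (jap k ^ (2 * m) * pw t k η) * (‖Z (k, η)‖₊ : ℝ≥0∞) ^ 2

/-- The dissipation `D_τ = ∬ ⟨k⟩^{2m} k² p⁻¹ |Z|²`. -/
def Dtau (t m : ℝ) (Z : ℝ × ℝ → ℂ) : ℝ≥0∞ :=
  ∫⁻ k : ℝ, ∫⁻ η : ℝ,
    ENNReal.ofReal (jap k ^ (2 * m) * k ^ 2 / pw t k η) * (‖Z (k, η)‖₊ : ℝ≥0∞) ^ 2

/-- The dissipation `D_α = μ·∬ ⟨k⟩^{2m} A(k)² (η−kt)² p |Z|²`. -/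
def Dal (t μ m : ℝ) (Z : ℝ × ℝ → ℂ) : ℝ≥0∞ :=
  ENNReal.ofReal μ * ∫⁻ k : ℝ, ∫⁻ η : ℝ,
    ENNReal.ofReal (jap k ^ (2 * m) * Aw μ k ^ 2 * (η - k * t) ^ 2 * pw t k η)
      * (‖Z (k, η)‖₊ : ℝ≥0∞) ^ 2

/-- The dissipation `D_{τα} = ∬ ⟨k⟩^{2m} A(k)² k² (η−kt)² p⁻¹ |Z|²`. -/
def Dta (t μ m : ℝ) (Z : ℝ × ℝ → ℂ) : ℝ≥0∞ :=
  ∫⁻ k : ℝ, ∫⁻ η : ℝ,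
    ENNReal.ofReal (jap k ^ (2 * m) * Aw μ k ^ 2 * k ^ 2 * (η - k * t) ^ 2 / pw t k η)
      * (‖Z (k, η)‖₊ : ℝ≥0∞) ^ 2

/-- The dissipation `D_β = ∬ ⟨k⟩^{2m} B(k)² k² |Z|²`. -/
def Db (t μ m : ℝ) (Z : ℝ × ℝ → ℂ) : ℝ≥0∞ :=
  ∫⁻ k : ℝ, ∫⁻ η : ℝ,
    ENNReal.ofReal (jap k ^ (2 * m) * Bw μ k ^ 2 * k ^ 2) * (‖Z (k, η)‖₊ : ℝ≥0∞) ^ 2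

lemma jap_pos (k : ℝ) : 0 < jap k := Real.sqrt_pos.mpr (by positivity)

lemma measurable_jap : Measurable jap := by unfold jap; fun_prop

lemma cs_sq {f g : ℝ → ℝ≥0∞} (hf : Measurable f) (hg : Measurable g) :
    (∫⁻ x, f x * g x) ^ 2 ≤ (∫⁻ x, f x ^ 2) * (∫⁻ x, g x ^ 2) := by
  have h := ENNReal.lintegral_mul_le_Lp_mul_Lq volume Real.HolderConjugate.two_two
    hf.aemeasurable hg.aemeasurable
  simp only [Pi.mul_apply, ENNReal.rpow_two] at h
  calc (∫⁻ x, f x * g x) ^ 2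
      ≤ ((∫⁻ x, f x ^ 2) ^ (1 / 2 : ℝ) * (∫⁻ x, g x ^ 2) ^ (1 / 2 : ℝ)) ^ 2 := by gcongr
    _ = _ := by
      rw [mul_pow, ← ENNReal.rpow_two, ← ENNReal.rpow_two, ← ENNReal.rpow_mul,
        ← ENNReal.rpow_mul]
      norm_num

lemma lint_cauchy (c s : ℝ) (hs : 0 < s) :
    ∫⁻ x : ℝ, ENNReal.ofReal ((1 + (s * (x - c)) ^ 2)⁻¹) = ENNReal.ofReal (π / s) := by
  have hi : Integrable (fun x : ℝ => (1 + (s * (x - c)) ^ 2)⁻¹) :=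
    (integrable_inv_one_add_sq.comp_mul_left' hs.ne').comp_sub_right c
  rw [← ofReal_integral_eq_lintegral_ofReal hi (Filter.Eventually.of_forall fun x => by positivity)]
  congr 1
  rw [integral_sub_right_eq_self (fun x : ℝ => (1 + (s * x) ^ 2)⁻¹) c,
    Measure.integral_comp_mul_left (fun x : ℝ => (1 + x ^ 2)⁻¹) s, integral_univ_inv_one_add_sq,
    abs_of_pos (by positivity), smul_eq_mul]
  field_simp

lemma interp_s (c s : ℝ) (hs : 0 < s) {g : ℝ → ℝ≥0∞} (hg : Measurable g) :
    (∫⁻ x, g x) ^ 2 ≤ ENNReal.ofReal (π / s) *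
      ((∫⁻ x, g x ^ 2) + ENNReal.ofReal (s ^ 2) *
        ∫⁻ x, ENNReal.ofReal ((x - c) ^ 2) * g x ^ 2) := by
  have h := cs_sq (f := fun x => ENNReal.ofReal (√((1 + (s * (x - c)) ^ 2)⁻¹)))
    (g := fun x => ENNReal.ofReal (√(1 + (s * (x - c)) ^ 2)) * g x)
    (by fun_prop) (by fun_prop)
  have e1 : ∀ x, ENNReal.ofReal (√((1 + (s * (x - c)) ^ 2)⁻¹)) *
      (ENNReal.ofReal (√(1 + (s * (x - c)) ^ 2)) * g x) = g x := by
    intro x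
    have : 0 < 1 + (s * (x - c)) ^ 2 := by positivity
    rw [← mul_assoc, ← ENNReal.ofReal_mul (by positivity), ← Real.sqrt_mul (by positivity),
      inv_mul_cancel₀ this.ne']
    simp
  have e2 : ∀ x, ENNReal.ofReal (√((1 + (s * (x - c)) ^ 2)⁻¹)) ^ 2
      = ENNReal.ofReal ((1 + (s * (x - c)) ^ 2)⁻¹) := by
    intro x
    rw [← ENNReal.ofReal_pow (by positivity), Real.sq_sqrt (by positivity)]
  have e3 : ∀ x, (ENNReal.ofReal (√(1 + (s * (x - c)) ^ 2)) * g x) ^ 2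
      = g x ^ 2 + ENNReal.ofReal (s ^ 2) * (ENNReal.ofReal ((x - c) ^ 2) * g x ^ 2) := by
    intro x
    rw [mul_pow, ← ENNReal.ofReal_pow (by positivity), Real.sq_sqrt (by positivity),
      ENNReal.ofReal_add (by positivity) (by positivity), mul_pow,
      ENNReal.ofReal_mul (by positivity)]
    simp only [ENNReal.ofReal_one]
    ring
  simp only [e1, e2, e3] at h
  rw [lint_cauchy c s hs, lintegral_add_left (by fun_prop), lintegral_const_mul _ (by fun_prop)] at h
  exact h

lemma interp (c : ℝ) {g : ℝ → ℝ≥0∞} (hg : Measurable g) :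
    (∫⁻ x, g x) ^ 2 ≤ ENNReal.ofReal (2 * π) *
      ((∫⁻ x, g x ^ 2) ^ (1 / 2 : ℝ) *
        (∫⁻ x, ENNReal.ofReal ((x - c) ^ 2) * g x ^ 2) ^ (1 / 2 : ℝ)) := by
  have hpi : ENNReal.ofReal (2 * π) ≠ 0 := by
    simp only [ne_eq, ENNReal.ofReal_eq_zero, not_le]; positivity
  have hS := fun s hs => interp_s c s hs hg
  set P := ∫⁻ x, g x ^ 2 with hP
  set Q := ∫⁻ x, ENNReal.ofReal ((x - c) ^ 2) * g x ^ 2 with hQ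
  by_cases hP0 : P = 0
  · have : ∀ᵐ x, g x = 0 := by
      rw [hP, lintegral_eq_zero_iff (by fun_prop)] at hP0
      filter_upwards [hP0] with x hx
      simpa using hx
    rw [lintegral_congr_ae this]; simp
  by_cases hQ0 : Q = 0
  · have : ∀ᵐ x, g x = 0 := by
      rw [hQ, lintegral_eq_zero_iff (by fun_prop)] at hQ0
      filter_upwards [hQ0, (Set.finite_singleton c).countable.ae_notMem volume] with x hx hxc
      have h0 : x - c ≠ 0 := sub_ne_zero.mpr (by simpa using hxc)
      simp only [Pi.zero_apply, mul_eq_zero, ENNReal.ofReal_eq_zero] at hx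
      rcases hx with hx | hx
      · exact absurd hx (not_le.mpr (by positivity))
      · simpa using hx
    rw [lintegral_congr_ae this]; simp
  by_cases hPt : P = ⊤
  · have : Q ^ (1 / 2 : ℝ) ≠ 0 := by simp [hQ0]
    rw [hPt, ENNReal.top_rpow_of_pos (by norm_num), ENNReal.top_mul this, ENNReal.mul_top hpi]
    exact le_top
  by_cases hQt : Q = ⊤
  · have : P ^ (1 / 2 : ℝ) ≠ 0 := by simp [hP0]
    rw [hQt, ENNReal.top_rpow_of_pos (by norm_num), ENNReal.mul_top this, ENNReal.mul_top hpi]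
    exact le_top
  have hp : 0 < P.toReal := ENNReal.toReal_pos hP0 hPt
  have hq : 0 < Q.toReal := ENNReal.toReal_pos hQ0 hQt
  obtain ⟨p, hpP⟩ : ∃ p, p = P.toReal := ⟨_, rfl⟩
  obtain ⟨q, hqQ⟩ : ∃ q, q = Q.toReal := ⟨_, rfl⟩
  have hPp : P = ENNReal.ofReal p := by rw [hpP, ENNReal.ofReal_toReal hPt]
  have hQq : Q = ENNReal.ofReal q := by rw [hqQ, ENNReal.ofReal_toReal hQt]
  rw [← hpP] at hp
  rw [← hqQ] at hq
  have h := hS (√p / √q) (by positivity)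
  rw [hPp, hQq] at h ⊢
  clear hpP hqQ hPp hQq
  refine h.trans (le_of_eq ?_)
  rw [ENNReal.ofReal_rpow_of_pos hp, ENNReal.ofReal_rpow_of_pos hq,
    ← ENNReal.ofReal_mul (by positivity), ← ENNReal.ofReal_mul (by positivity),
    ← ENNReal.ofReal_add (by positivity) (by positivity),
    ← ENNReal.ofReal_mul (by positivity), ← ENNReal.ofReal_mul (by positivity),
    ← Real.sqrt_eq_rpow, ← Real.sqrt_eq_rpow]
  congr 1
  have hp' : p = √p ^ 2 := (Real.sq_sqrt hp.le).symm
  have hq' : q = √q ^ 2 := (Real.sq_sqrt hq.le).symm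
  have h1 : 0 < √p := by positivity
  have h2 : 0 < √q := by positivity
  generalize √p = a at *
  generalize √q = b at *
  subst hp' hq'
  field_simp
  ring

/-- `G = D_γ / μ`. -/
def Gg (t m : ℝ) (Z : ℝ × ℝ → ℂ) : ℝ≥0∞ :=
  ∫⁻ k : ℝ, ∫⁻ η : ℝ,
    ENNReal.ofReal (jap k ^ (2 * m) * pw t k η) * (‖Z (k, η)‖₊ : ℝ≥0∞) ^ 2

lemma Dg_rpow (t μ m α β : ℝ) (hμ : 0 < μ) (hα : 0 ≤ α) (hβ : β = -α) (Z : ℝ × ℝ → ℂ) :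
    ENNReal.ofReal (μ ^ β) * Dg t μ m Z ^ α = Gg t m Z ^ α := by
  subst hβ
  unfold Dg
  rw [ENNReal.mul_rpow_of_nonneg _ _ hα, ENNReal.ofReal_rpow_of_pos hμ, ← mul_assoc,
    ← ENNReal.ofReal_mul (by positivity), ← Real.rpow_add hμ]
  simp [Gg]

lemma main_bound (t m : ℝ) (Z : ℝ × ℝ → ℂ) (hZ : Measurable Z) :
    L2L1n (fun k _ => jap k ^ m) Z ≤ ENNReal.ofReal (√(2 * π)) *
      (Gg t m Z ^ (1 / 4 : ℝ) * L2n (fun k _ => jap k ^ m) Z ^ (1 / 2 : ℝ)) := by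
  have hj := measurable_jap
  set g : ℝ → ℝ → ℝ≥0∞ := fun k η => ENNReal.ofReal (jap k ^ m) * (‖Z (k, η)‖₊ : ℝ≥0∞) with hg
  have hgm : Measurable (fun q : ℝ × ℝ => g q.1 q.2) := by simp only [hg]; fun_prop
  set a : ℝ → ℝ≥0∞ := fun k => ∫⁻ η, g k η ^ 2 with ha
  set d : ℝ → ℝ≥0∞ := fun k => ∫⁻ η, ENNReal.ofReal (pw t k η) * g k η ^ 2 with hd
  have ham : Measurable a := (hgm.pow_const 2).lintegral_prod_right'
  have hdm : Measurable d := by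
    have : Measurable (fun q : ℝ × ℝ => ENNReal.ofReal (pw t q.1 q.2) * g q.1 q.2 ^ 2) := by
      unfold pw; fun_prop
    exact this.lintegral_prod_right'
  have hG : Gg t m Z = ∫⁻ k, d k := by
    unfold Gg
    refine lintegral_congr fun k => lintegral_congr fun η => ?_
    have hk := jap_pos k
    simp only [hg]
    rw [ENNReal.ofReal_mul (by positivity), mul_pow, ← ENNReal.ofReal_pow (by positivity),
      ← Real.rpow_natCast, ← Real.rpow_mul hk.le, mul_comm 2 m]
    push_cast
    ring
  have hk : ∀ k, (∫⁻ η, g k η) ^ 2 ≤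
      ENNReal.ofReal (2 * π) * (a k ^ (1 / 2 : ℝ) * d k ^ (1 / 2 : ℝ)) := by
    intro k
    have hgk : Measurable (g k) := by simp only [hg]; fun_prop
    have hcd : (∫⁻ x, ENNReal.ofReal ((x - k * t) ^ 2) * g k x ^ 2) ≤ d k := by
      simp only [hd]
      refine lintegral_mono fun η => mul_le_mul_left (ENNReal.ofReal_le_ofReal ?_) _
      unfold pw
      nlinarith [sq_nonneg k]
    refine (interp (k * t) hgk).trans ?_
    exact mul_le_mul_right (mul_le_mul_right (ENNReal.rpow_le_rpow hcd (by norm_num)) _) _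
  have hcs := cs_sq (ham.pow_const (1 / 2 : ℝ)) (hdm.pow_const (1 / 2 : ℝ))
  have e : ∀ y : ℝ≥0∞, (y ^ (1 / 2 : ℝ)) ^ 2 = y := by
    intro y; rw [← ENNReal.rpow_two, ← ENNReal.rpow_mul]; norm_num
  simp only [e] at hcs
  have hcs' : ∫⁻ k, a k ^ (1 / 2 : ℝ) * d k ^ (1 / 2 : ℝ) ≤
      ((∫⁻ k, a k) * ∫⁻ k, d k) ^ (1 / 2 : ℝ) := by
    have := ENNReal.rpow_le_rpow hcs (show (0 : ℝ) ≤ 1 / 2 by norm_num)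
    rw [← ENNReal.rpow_two, ← ENNReal.rpow_mul] at this
    norm_num at this ⊢
    exact this
  have hall : ∫⁻ k, (∫⁻ η, g k η) ^ 2 ≤ ENNReal.ofReal (2 * π) *
      ((∫⁻ k, a k) * ∫⁻ k, d k) ^ (1 / 2 : ℝ) := by
    refine (lintegral_mono hk).trans ?_
    rw [lintegral_const_mul _ (by fun_prop)]
    gcongr
  unfold L2L1n L2n
  refine (ENNReal.rpow_le_rpow hall (show (0 : ℝ) ≤ 1 / 2 by norm_num)).trans (le_of_eq ?_)
  rw [ENNReal.mul_rpow_of_nonneg _ _ (by norm_num), ENNReal.ofReal_rpow_of_pos (by positivity),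
    ← Real.sqrt_eq_rpow, hG, ← ENNReal.rpow_mul, ← ENNReal.rpow_mul,
    ENNReal.mul_rpow_of_nonneg _ _ (by norm_num), mul_comm ((∫⁻ k, a k) ^ _)]
  norm_num
  rfl

/-- The Cauchy–Schwarz weight. -/
def hw (m k : ℝ) : ℝ := jap k ^ (-(1 : ℝ) / 2 - m) * (min (|k| ^ ((1 : ℝ) / 4)) 1)⁻¹

lemma hw_fin (m : ℝ) (hm : 0 < m) : ∫⁻ k, ENNReal.ofReal (hw m k) ^ 2 < ⊤ := by
  set F : ℝ → ℝ := Set.indicator (Set.Ioo 0 1) (fun x => x ^ (-(1 : ℝ) / 2)) with hF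
  have hFi : Integrable F := by
    rw [hF, integrable_indicator_iff measurableSet_Ioo]
    have := intervalIntegral.intervalIntegrable_rpow' (a := 0) (b := 1)
      (show -1 < -(1 : ℝ) / 2 by norm_num)
    rw [intervalIntegrable_iff_integrableOn_Ioo_of_le (by norm_num)] at this
    exact this
  have hJ : Integrable (fun k : ℝ => ((1 : ℝ) + ‖k‖ ^ 2) ^ (-(1 + 2 * m) / 2)) :=
    integrable_rpow_neg_one_add_norm_sq (by simp; linarith)
  have hT := (hJ.add hFi).add hFi.comp_neg
  refine lt_of_le_of_lt (lintegral_mono_ae ?_) hT.lintegral_lt_top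
  filter_upwards [(Set.finite_singleton (0 : ℝ)).countable.ae_notMem volume] with k hk0
  have hk0 : k ≠ 0 := by simpa using hk0
  have hj := jap_pos k
  have hmin : 0 < min (|k| ^ ((1 : ℝ) / 4)) 1 := lt_min (by positivity) one_pos
  have hFn : ∀ x, 0 ≤ F x := fun x => Set.indicator_nonneg (fun y hy => by
    have := hy.1; positivity) x
  rw [← ENNReal.ofReal_pow (by unfold hw; positivity)]
  apply ENNReal.ofReal_le_ofReal
  have e1 : (jap k ^ (-(1 : ℝ) / 2 - m)) ^ 2 = ((1 : ℝ) + ‖k‖ ^ 2) ^ (-(1 + 2 * m) / 2) := by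
    rw [← Real.rpow_natCast, ← Real.rpow_mul hj.le]
    unfold jap
    rw [Real.sqrt_eq_rpow, ← Real.rpow_mul (by positivity)]
    simp only [Real.norm_eq_abs, sq_abs]
    congr 1
    push_cast; ring
  have e2 : ((1 : ℝ) + ‖k‖ ^ 2) ^ (-(1 + 2 * m) / 2) ≤ 1 :=
    Real.rpow_le_one_of_one_le_of_nonpos (by nlinarith [sq_nonneg ‖k‖]) (by linarith)
  have e0 : 0 ≤ ((1 : ℝ) + ‖k‖ ^ 2) ^ (-(1 + 2 * m) / 2) := by positivity
  simp only [Pi.add_apply]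
  unfold hw
  rw [mul_pow, e1]
  by_cases h1 : 1 ≤ |k|
  · rw [min_eq_right (Real.one_le_rpow h1 (by norm_num))]
    have := hFn k
    have := hFn (-k)
    norm_num
    simp only [Real.norm_eq_abs, sq_abs] at *
    linarith
  · push Not at h1
    rw [min_eq_left (Real.rpow_le_one (abs_nonneg k) h1.le (by norm_num))]
    have e3 : ((|k| ^ ((1 : ℝ) / 4))⁻¹) ^ 2 = |k| ^ (-(1 : ℝ) / 2) := by
      rw [← Real.rpow_neg (abs_nonneg k), ← Real.rpow_natCast, ← Real.rpow_mul (abs_nonneg k)]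
      norm_num
    have e4 : |k| ^ (-(1 : ℝ) / 2) ≤ F k + F (-k) := by
      rcases lt_or_gt_of_ne hk0 with h | h
      · rw [abs_of_neg h] at h1 ⊢
        have : F (-k) = (-k) ^ (-(1 : ℝ) / 2) := by
          rw [hF]; exact Set.indicator_of_mem (Set.mem_Ioo.mpr ⟨by linarith, h1⟩) _
        linarith [hFn k]
      · rw [abs_of_pos h] at h1 ⊢
        have : F k = k ^ (-(1 : ℝ) / 2) := by
          rw [hF]; exact Set.indicator_of_mem (Set.mem_Ioo.mpr ⟨h, h1⟩) _
        linarith [hFn (-k)]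
    rw [e3]
    have e5 : 0 ≤ |k| ^ (-(1 : ℝ) / 2) := by positivity
    nlinarith [mul_le_mul_of_nonneg_right e2 e5]

lemma first_bound (m : ℝ) (Z : ℝ × ℝ → ℂ) (hZ : Measurable Z) :
    L1n (fun k _ => jap k ^ (-(1 : ℝ) / 2)) Z ≤
      (∫⁻ k, ENNReal.ofReal (hw m k) ^ 2) ^ (1 / 2 : ℝ) *
        L2L1n (fun k _ => jap k ^ m * min (|k| ^ ((1 : ℝ) / 4)) 1) Z := by
  have hj := measurable_jap
  have hwm : Measurable (hw m) := by unfold hw; fun_prop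
  set u : ℝ → ℝ≥0∞ := fun k => ∫⁻ η : ℝ,
    ENNReal.ofReal (jap k ^ m * min (|k| ^ ((1 : ℝ) / 4)) 1) * (‖Z (k, η)‖₊ : ℝ≥0∞) with hu
  have hum : Measurable u := by
    have : Measurable (fun q : ℝ × ℝ => ENNReal.ofReal (jap q.1 ^ m *
      min (|q.1| ^ ((1 : ℝ) / 4)) 1) * (‖Z (q.1, q.2)‖₊ : ℝ≥0∞)) := by fun_prop
    exact this.lintegral_prod_right'
  have h := cs_sq (f := fun k => ENNReal.ofReal (hw m k)) (g := u) (by fun_prop) hum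
  have e : L1n (fun k _ => jap k ^ (-(1 : ℝ) / 2)) Z = ∫⁻ k, ENNReal.ofReal (hw m k) * u k := by
    unfold L1n
    apply lintegral_congr_ae
    filter_upwards [(Set.finite_singleton (0 : ℝ)).countable.ae_notMem volume] with k hk0
    have hk0 : k ≠ 0 := by simpa using hk0
    have hk := jap_pos k
    have hmin : 0 < min (|k| ^ ((1 : ℝ) / 4)) 1 := lt_min (by positivity) one_pos
    simp only [hu]
    rw [← lintegral_const_mul _ (by fun_prop)]
    refine lintegral_congr fun η => ?_
    rw [← mul_assoc, ← ENNReal.ofReal_mul (by unfold hw; positivity)]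
    congr 2
    unfold hw
    have : jap k ^ (-(1 : ℝ) / 2) = jap k ^ (-(1 : ℝ) / 2 - m) * jap k ^ m := by
      rw [← Real.rpow_add hk]; congr 1; ring
    rw [this]
    field_simp
  rw [e]
  have := ENNReal.rpow_le_rpow h (show (0 : ℝ) ≤ 1 / 2 by norm_num)
  rw [← ENNReal.rpow_two, ← ENNReal.rpow_mul, ENNReal.mul_rpow_of_nonneg _ _ (by norm_num)] at this
  unfold L2L1n
  norm_num at this ⊢
  exact this

lemma L2L1n_mono {w w' : ℝ → ℝ → ℝ} (h : ∀ k η, w k η ≤ w' k η) (Z : ℝ × ℝ → ℂ) :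
    L2L1n w Z ≤ L2L1n w' Z := by
  unfold L2L1n
  gcongr with k η
  exact h k η

lemma L1n_mono {w w' : ℝ → ℝ → ℝ} (h : ∀ k η, w k η ≤ w' k η) (Z : ℝ × ℝ → ℂ) :
    L1n w Z ≤ L1n w' Z := by
  unfold L1n
  gcongr with k η
  exact h k η

lemma young (δ : ℝ) (hδ : δ ∈ Set.Ioo (0 : ℝ) (1 / 12)) (G E : ℝ≥0∞) :
    G ^ (1 / 4 : ℝ) * E ^ (1 / 2 : ℝ) ≤
      G ^ (1 / 8 : ℝ) * E ^ (3 / 4 : ℝ) + G ^ (1 / 4 + δ) * E ^ (1 / 2 - 2 * δ) := by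
  obtain ⟨h0, h1⟩ := hδ
  rcases eq_or_ne G 0 with rfl | hG0
  · simp
  rcases eq_or_ne E 0 with rfl | hE0
  · simp
  rcases eq_or_ne G ⊤ with rfl | hGt
  · have : E ^ (3 / 4 : ℝ) ≠ 0 := by simp [hE0]; norm_num
    rw [ENNReal.top_rpow_of_pos (y := 1 / 8) (by norm_num), ENNReal.top_mul this]
    simp
  rcases eq_or_ne E ⊤ with rfl | hEt
  · have : G ^ (1 / 8 : ℝ) ≠ 0 := by simp [hG0, hGt]
    rw [ENNReal.top_rpow_of_pos (y := 3 / 4) (by norm_num), ENNReal.mul_top this]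
    simp
  have hg : 0 < G.toReal := ENNReal.toReal_pos hG0 hGt
  have he : 0 < E.toReal := ENNReal.toReal_pos hE0 hEt
  rw [← ENNReal.ofReal_toReal hGt, ← ENNReal.ofReal_toReal hEt]
  generalize G.toReal = g at *
  generalize E.toReal = e at *
  simp only [ENNReal.ofReal_rpow_of_pos hg, ENNReal.ofReal_rpow_of_pos he]
  rw [← ENNReal.ofReal_mul (by positivity), ← ENNReal.ofReal_mul (by positivity),
    ← ENNReal.ofReal_mul (by positivity), ← ENNReal.ofReal_add (by positivity) (by positivity)]
  apply ENNReal.ofReal_le_ofReal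
  have key : ∀ α β : ℝ, g ^ α * e ^ β = (g ^ (1 / 4 : ℝ) * e ^ (1 / 2 : ℝ)) *
      (g ^ (α - 1 / 4) * e ^ (β - 1 / 2)) := by
    intro α β
    rw [mul_mul_mul_comm, ← Real.rpow_add hg, ← Real.rpow_add he]
    congr 2 <;> ring
  have k1 : g ^ ((1 / 8 : ℝ) - 1 / 4) * e ^ ((3 / 4 : ℝ) - 1 / 2) = (g / e ^ 2) ^ (-(1 / 8) : ℝ) := by
    rw [Real.div_rpow hg.le (by positivity), ← Real.rpow_natCast, ← Real.rpow_mul he.le,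
      div_eq_mul_inv (g ^ _), ← Real.rpow_neg he.le]
    congr 2 <;> norm_num
  have k2 : g ^ ((1 / 4 + δ : ℝ) - 1 / 4) * e ^ ((1 / 2 - 2 * δ : ℝ) - 1 / 2) = (g / e ^ 2) ^ δ := by
    rw [Real.div_rpow hg.le (by positivity), ← Real.rpow_natCast, ← Real.rpow_mul he.le,
      div_eq_mul_inv (g ^ _), ← Real.rpow_neg he.le]
    congr 2 <;> push_cast <;> ring
  rw [key (1 / 8) (3 / 4), key (1 / 4 + δ) (1 / 2 - 2 * δ), k1, k2, ← mul_add]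
  have hX : 0 < g / e ^ 2 := by positivity
  generalize g / e ^ 2 = X at *
  refine le_mul_of_one_le_right (by positivity) ?_
  have p1 : 0 < X ^ (-(1 / 8) : ℝ) := by positivity
  have p2 : 0 < X ^ δ := by positivity
  rcases le_total X 1 with h | h
  · have := Real.one_le_rpow_of_pos_of_le_one_of_nonpos hX h (show -(1 / 8 : ℝ) ≤ 0 by norm_num)
    linarith
  · have := Real.one_le_rpow h h0.le
    linarith

lemma Aw_nonneg (μ k : ℝ) (hμ : 0 < μ) : 0 ≤ Aw μ k := by
  unfold Aw; split_ifs <;> positivity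

lemma Aw_le_one (μ k : ℝ) (hμ : 0 < μ) : Aw μ k ≤ 1 := by
  unfold Aw
  split_ifs with h
  · exact le_rfl
  · push Not at h
    have hk : 0 < |k| := hμ.trans_le h
    rw [neg_div, Real.rpow_neg hk.le, ← div_eq_mul_inv, div_le_one (by positivity)]
    exact Real.rpow_le_rpow hμ.le h (by norm_num)

/-- interpolation lemma for `D_γ`: there is `C = C(m,δ)` such
that for all `t`, `μ ∈ (0,1)` and measurable `Z`, the three weighted estimates
(i)–(iii) of the lemma hold. -/
theorem stmt14 (m δ : ℝ) (hm : 0 < m) (hδ : δ ∈ Set.Ioo (0 : ℝ) (1 / 12)) :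
    ∃ C : ℝ, 0 < C ∧
      ∀ (t μ : ℝ), μ ∈ Set.Ioo (0 : ℝ) 1 →
        ∀ Z : ℝ × ℝ → ℂ, Measurable Z →
          (L1n (fun k _ => jap k ^ (-(1 : ℝ) / 2)) Z
              ≤ ENNReal.ofReal C *
                  L2L1n (fun k _ => jap k ^ m * min (|k| ^ ((1 : ℝ) / 4)) 1) Z ∧
            L2L1n (fun k _ => jap k ^ m * min (|k| ^ ((1 : ℝ) / 4)) 1) Z
              ≤ ENNReal.ofReal C *
                  (ENNReal.ofReal (μ ^ (-(1 / 4 : ℝ))) * Dg t μ m Z ^ ((1 : ℝ) / 4)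
                    * (En t μ m Z ^ ((1 : ℝ) / 2)
                      + ENNReal.ofReal (μ ^ (-δ)) * Dg t μ m Z ^ δ
                          * En t μ m Z ^ ((1 : ℝ) / 2 - 2 * δ)))) ∧
          L2L1n (fun k _ => jap k ^ m) Z
            ≤ ENNReal.ofReal C *
                (ENNReal.ofReal (μ ^ (-(1 / 8 : ℝ))) * Dg t μ m Z ^ ((1 : ℝ) / 8)
                    * En t μ m Z ^ ((3 : ℝ) / 4)
                  + ENNReal.ofReal (μ ^ (-(1 / 4 : ℝ) - δ)) * Dg t μ m Z ^ ((1 : ℝ) / 4 + δ)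
                      * En t μ m Z ^ ((1 : ℝ) / 2 - 2 * δ)) ∧
          L1n (fun k _ => Aw μ k ^ (2 * δ) * jap k ^ (-(1 : ℝ) / 2)) Z
            ≤ ENNReal.ofReal C *
                (ENNReal.ofReal (μ ^ (-(1 / 4 : ℝ))) * (1 + ENNReal.ofReal (μ ^ (-δ)))
                  * Dg t μ m Z ^ ((1 : ℝ) / 4) * En t μ m Z ^ ((1 : ℝ) / 2)) := by
  set K := ∫⁻ k, ENNReal.ofReal (hw m k) ^ 2 with hK
  have hKt : K ^ (1 / 2 : ℝ) ≠ ⊤ := ENNReal.rpow_ne_top_of_nonneg (by norm_num) (hw_fin m hm).ne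
  set c1 : ℝ := (K ^ (1 / 2 : ℝ)).toReal + 1 with hc1
  set c0 : ℝ := √(2 * π) + 1 with hc0
  have hc1' : 1 ≤ c1 := by
    have : 0 ≤ (K ^ (1 / 2 : ℝ)).toReal := ENNReal.toReal_nonneg
    linarith
  have hc0' : 1 ≤ c0 := by
    have : 0 ≤ √(2 * π) := Real.sqrt_nonneg _
    linarith
  have hK1 : K ^ (1 / 2 : ℝ) ≤ ENNReal.ofReal c1 := by
    rw [← ENNReal.ofReal_toReal hKt]
    exact ENNReal.ofReal_le_ofReal (by linarith)
  have hle1 : ENNReal.ofReal c1 ≤ ENNReal.ofReal (c1 * c0) :=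
    ENNReal.ofReal_le_ofReal (by nlinarith)
  have hle0 : ENNReal.ofReal (√(2 * π)) ≤ ENNReal.ofReal (c1 * c0) :=
    ENNReal.ofReal_le_ofReal (by nlinarith)
  refine ⟨c1 * c0, by positivity, ?_⟩
  intro t μ hμ Z hZ
  have hμ0 := hμ.1
  have hmain : L2L1n (fun k _ => jap k ^ m) Z ≤ ENNReal.ofReal (√(2 * π)) *
      (Gg t m Z ^ (1 / 4 : ℝ) * En t μ m Z ^ (1 / 2 : ℝ)) := by
    refine (main_bound t m Z hZ).trans ?_
    gcongr
    exact le_self_add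
  have hfirst := first_bound m Z hZ
  rw [← hK] at hfirst
  have hmin : L2L1n (fun k _ => jap k ^ m * min (|k| ^ ((1 : ℝ) / 4)) 1) Z ≤
      L2L1n (fun k _ => jap k ^ m) Z := by
    refine L2L1n_mono (fun k _ => ?_) Z
    have hk := jap_pos k
    exact mul_le_of_le_one_right (by positivity) (min_le_right _ _)
  have d4 := Dg_rpow t μ m (1 / 4) (-(1 / 4)) hμ0 (by norm_num) rfl Z
  have d8 := Dg_rpow t μ m (1 / 8) (-(1 / 8)) hμ0 (by norm_num) rfl Z
  have d4δ := Dg_rpow t μ m (1 / 4 + δ) (-(1 / 4) - δ) hμ0 (by linarith [hδ.1]) (by ring) Z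
  refine ⟨⟨?_, ?_⟩, ?_, ?_⟩
  · exact hfirst.trans (by gcongr; exact hK1.trans hle1)
  · rw [d4]
    refine (hmin.trans hmain).trans ?_
    gcongr
    exact le_self_add
  · rw [d8, d4δ]
    refine hmain.trans ?_
    gcongr
    exact young δ hδ _ _
  · have hA : L1n (fun k _ => Aw μ k ^ (2 * δ) * jap k ^ (-(1 : ℝ) / 2)) Z ≤
        L1n (fun k _ => jap k ^ (-(1 : ℝ) / 2)) Z := by
      refine L1n_mono (fun k _ => ?_) Z
      have hk := jap_pos k
      exact mul_le_of_le_one_left (by positivity)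
        (Real.rpow_le_one (Aw_nonneg μ k hμ0) (Aw_le_one μ k hμ0) (by linarith [hδ.1]))
    have hre : ENNReal.ofReal (μ ^ (-(1 / 4 : ℝ))) * (1 + ENNReal.ofReal (μ ^ (-δ)))
        * Dg t μ m Z ^ ((1 : ℝ) / 4) * En t μ m Z ^ ((1 : ℝ) / 2) =
        (1 + ENNReal.ofReal (μ ^ (-δ))) * (Gg t m Z ^ (1 / 4 : ℝ) * En t μ m Z ^ (1 / 2 : ℝ)) := by
      rw [← d4]; ring
    rw [hre]
    calc _ ≤ _ := hA
      _ ≤ _ := hfirst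
      _ ≤ ENNReal.ofReal c1 * (ENNReal.ofReal c0 *
          (Gg t m Z ^ (1 / 4 : ℝ) * En t μ m Z ^ (1 / 2 : ℝ))) := by
        gcongr
        refine (hmin.trans hmain).trans ?_
        gcongr
        linarith
      _ = ENNReal.ofReal (c1 * c0) * (1 *
          (Gg t m Z ^ (1 / 4 : ℝ) * En t μ m Z ^ (1 / 2 : ℝ))) := by
        rw [ENNReal.ofReal_mul (by positivity)]; ring
      _ ≤ _ := by
        gcongr
        exact le_self_add
end
end
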